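/- Let λ > λ' > 0 and ξ > 0 be real numbers, and define L₁ = λ² + λ'² − 2λξ − 2λ'ξ + 4ξ² and L₂ = λ²λ'² − 2λ²λ'ξ − 2λλ'²ξ + (λ + λ')²ξ². If ξ > 2(λ + λ')λ'/(λ + 3λ'), then λ'⁴ > L₁λ'² − L₂. -/

import Mathlib

/-- Key step of Appendix B for `σ₁ > λ'`: if `ξ > 2(λ + λ')λ'/(λ + 3λ')`, then
`λ'⁴ > L₁λ'² - L₂`. -/
theorem appendixB_key_step_sigma1
    (lam lam' ξ : ℝ) (h1 : lam' < lam) (h2 : 0 < lam') (h3 : 0 < ξ)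
    (L1 L2 : ℝ)
    (hL1 : L1 = lam ^ 2 + lam' ^ 2 - 2 * lam * ξ - 2 * lam' * ξ + 4 * ξ ^ 2)
    (hL2 : L2 = lam ^ 2 * lam' ^ 2 - 2 * lam ^ 2 * lam' * ξ - 2 * lam * lam' ^ 2 * ξ
        + (lam + lam') ^ 2 * ξ ^ 2)
    (hξ : 2 * (lam + lam') * lam' / (lam + 3 * lam') < ξ) :
    L1 * lam' ^ 2 - L2 < lam' ^ 4 := by
  rw [div_lt_iff₀ (by linarith)] at hξ
  have key : 0 < ξ * (lam - lam') * (ξ * (lam + 3 * lam') - 2 * (lam + lam') * lam') :=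
    mul_pos (mul_pos h3 (sub_pos.2 h1)) (sub_pos.2 hξ)
  subst hL1 hL2
  linarith [key]
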